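/- Every nonzero 2-dimensional pre-Poisson algebra (P, ·, ∘) over ℂ is isomorphic to one of the following algebras, given on a basis e1, e2 (all unlisted products of basis elements are zero): with · ≡ 0: the pre-Lie algebras P01: e1∘e1 = e1 + e2, e2∘e1 = e2; P02: e1∘e1 = e1 + e2, e1∘e2 = e2; P03: e1∘e1 = e2; P04: e2∘e1 = e1; P05^α: e1∘e1 = e1, e1∘e2 = α·e2; P06^α: e1∘e1 = e1, e1∘e2 = α·e2, e2∘e1 = e2; P07: e1∘e1 = e1, e2∘e2 = e2; P08: e1∘e1 = e1, e1∘e2 = 2·e2, e2∘e1 = (1/2)·e1 + e2, e2∘e2 = e2; or: P09^α (α ∈ ℂ): e1·e1 = e2, e1∘e1 = α·e2; P10: e1·e1 = e2, e1∘e1 = e1, e1∘e2 = e2, e2∘e1 = e2. Moreover, P09^α ≅ P09^β if and only if α = β. -/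

import Mathlib

noncomputable section

/-- The 2-dimensional complex vector space. -/
abbrev V2 : Type := Fin 2 → ℂ

/-- The bilinear multiplication on `V2` determined by a table of structure constants:
`c i j` is the product of the `i`-th and `j`-th basis vectors. -/
def tm (c : Fin 2 → Fin 2 → V2) : V2 → V2 → V2 :=
  fun x y => ∑ i, ∑ j, (x i * y j) • c i j

/-- Multiplication table with the given values of `e1*e1`, `e1*e2`, `e2*e1`, `e2*e2`. -/
def tbl (a b c d : V2) : Fin 2 → Fin 2 → V2 := ![![a, b], ![c, d]]

/-- The zero multiplication on `V2`. -/
def zm : V2 → V2 → V2 := fun _ _ => 0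

/-- Isomorphism of algebras with one multiplication: a ℂ-linear bijection preserving
the multiplication. -/
def Iso1 {A : Type*} [AddCommGroup A] [Module ℂ A] {B : Type*} [AddCommGroup B]
    [Module ℂ B] (μ : A → A → A) (ν : B → B → B) : Prop :=
  ∃ φ : A ≃ₗ[ℂ] B, ∀ x y, φ (μ x y) = ν (φ x) (φ y)

/-- Isomorphism of algebras with two multiplications: a ℂ-linear bijection preserving
both multiplications. -/
def Iso2 {A : Type*} [AddCommGroup A] [Module ℂ A] {B : Type*} [AddCommGroup B]
    [Module ℂ B] (μ₁ μ₂ : A → A → A) (ν₁ ν₂ : B → B → B) : Prop :=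
  ∃ φ : A ≃ₗ[ℂ] B,
    (∀ x y, φ (μ₁ x y) = ν₁ (φ x) (φ y)) ∧ (∀ x y, φ (μ₂ x y) = ν₂ (φ x) (φ y))

/-- The commutative associative algebra A01: `e1·e1 = e1`, `e2·e2 = e2`. -/
def cA01 : Fin 2 → Fin 2 → V2 := tbl ![1,0] 0 0 ![0,1]

/-- The commutative associative algebra A02: `e1·e1 = e1`, `e1·e2 = e2·e1 = e2`. -/
def cA02 : Fin 2 → Fin 2 → V2 := tbl ![1,0] ![0,1] ![0,1] 0

/-- The commutative associative algebra A03: `e1·e1 = e1`. -/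
def cA03 : Fin 2 → Fin 2 → V2 := tbl ![1,0] 0 0 0

/-- The commutative associative algebra A04: `e1·e1 = e2`. -/
def cA04 : Fin 2 → Fin 2 → V2 := tbl ![0,1] 0 0 0

/-- Index of the nonzero 2-dimensional pre-Lie algebras C01–C08. -/
inductive PLIdx : Type
  | c01 | c02 | c03 | c04
  | c05 (α : ℂ)
  | c06 (α : ℂ)
  | c07 | c08

/-- The multiplication tables of the nonzero 2-dimensional pre-Lie algebras C01–C08. -/
def plAlg : PLIdx → Fin 2 → Fin 2 → V2
  | .c01 => tbl ![1,1] 0 ![0,1] 0            -- e1∘e1 = e1+e2, e2∘e1 = e2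
  | .c02 => tbl ![1,1] ![0,1] 0 0            -- e1∘e1 = e1+e2, e1∘e2 = e2
  | .c03 => tbl ![0,1] 0 0 0                 -- e1∘e1 = e2
  | .c04 => tbl 0 0 ![1,0] 0                 -- e2∘e1 = e1
  | .c05 α => tbl ![1,0] ![0,α] 0 0          -- e1∘e1 = e1, e1∘e2 = α e2
  | .c06 α => tbl ![1,0] ![0,α] ![0,1] 0     -- e1∘e1 = e1, e1∘e2 = α e2, e2∘e1 = e2
  | .c07 => tbl ![1,0] 0 0 ![0,1]            -- e1∘e1 = e1, e2∘e2 = e2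
  | .c08 => tbl ![1,0] ![0,2] ![1/2,1] ![0,1]

/-!
Zinbiel side. Writing `x * y = x·y + y·x`, the Zinbiel identity says `L_x L_y = L_{x * y}`.
Comparing the two sides of it for `x·((x·x)·x)` shows that in dimension 2 the only possible nonzero
product on a basis `x`, `x·x` is `x·x` itself. If `x∘x = a x + b x·x`, the compatibility conditions
give `x∘(x·x) = (x·x)∘x = a x·x`. If `a ≠ 0`, another choice of `x` achieves `x∘x = x`.

Pre-Lie side (`· = 0`). A commutative pre-Lie algebra is associative; either it has an idempotent
`e`, and the Peirce decomposition of `e` gives the tables, or it is nilpotent. Otherwise the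
commutator spans a line, so there are `e`, `f` with `f∘e - e∘f = e`. As `[L_f, L_e] = L_e`, the
operator `L_e` is nilpotent, and `f` may be translated by a multiple of `e` so that `e∘e = q f`. For
`q ≠ 0` the product is determined up to rescaling `e`; for `q = 0` the line of `e` is an ideal and
all products are triangular.
-/

section StructureConstants

variable {ι K A : Type*} [Fintype ι] [CommRing K] [AddCommGroup A] [Module K A]

/-- The bilinear multiplication `μ` has structure constants `c` on the family `w`: the `k`-th
coefficient of `μ (w i) (w j)` is `c i j k`. The family need not be a basis. -/
def HasStructureConstants (μ : A →ₗ[K] A →ₗ[K] A) (w : ι → A) (c : ι → ι → ι → K) : Prop :=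
  ∀ i j, μ (w i) (w j) = ∑ k, c i j k • w k

theorem HasStructureConstants.equivFun_apply {b : Module.Basis ι K A} {μ : A →ₗ[K] A →ₗ[K] A}
    {c : ι → ι → ι → K} (h : HasStructureConstants μ b c) (x y : A) :
    b.equivFun (μ x y) = ∑ i, ∑ j, (b.equivFun x i * b.equivFun y j) • c i j := by
  have hbasis (i j : ι) : b.equivFun (μ (b i) (b j)) = c i j := by
    rw [h i j, ← b.equivFun_symm_apply, LinearEquiv.apply_symm_apply]
  conv_lhs => rw [← b.sum_equivFun x, ← b.sum_equivFun y]
  simp only [map_sum, map_smul, LinearMap.sum_apply, LinearMap.smul_apply, hbasis, smul_smul,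
    Finset.smul_sum]
  exact Finset.sum_comm.trans (by simp only [mul_comm])

end StructureConstants

section Tables

variable {P : Type*} [AddCommGroup P] [Module ℂ P]

theorem hasStructureConstants_tbl_iff {μ : P →ₗ[ℂ] P →ₗ[ℂ] P} {u v : P} {a b c d : V2} :
    HasStructureConstants μ ![u, v] (tbl a b c d) ↔
      μ u u = a 0 • u + a 1 • v ∧ μ u v = b 0 • u + b 1 • v ∧
        μ v u = c 0 • u + c 1 • v ∧ μ v v = d 0 • u + d 1 • v := by
  simp [HasStructureConstants, tbl, Fin.forall_fin_two, and_assoc]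

/-- The multiplication `μ` has structure constants `c` on some linearly independent pair. In
dimension 2 this says that `μ` is isomorphic to `tm c`. -/
def HasTable (μ : P →ₗ[ℂ] P →ₗ[ℂ] P) (c : Fin 2 → Fin 2 → V2) : Prop :=
  ∃ w : Fin 2 → P, LinearIndependent ℂ w ∧ HasStructureConstants μ w c

theorem HasTable.of_pair {μ : P →ₗ[ℂ] P →ₗ[ℂ] P} {u v : P} {a b c d : V2}
    (hind : LinearIndependent ℂ ![u, v]) (huu : μ u u = a 0 • u + a 1 • v)
    (huv : μ u v = b 0 • u + b 1 • v) (hvu : μ v u = c 0 • u + c 1 • v)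
    (hvv : μ v v = d 0 • u + d 1 • v) : HasTable μ (tbl a b c d) :=
  ⟨![u, v], hind, hasStructureConstants_tbl_iff.2 ⟨huu, huv, hvu, hvv⟩⟩

theorem tm_zero : tm 0 = zm := by
  ext x y i
  simp [tm, zm]

theorem iso2_tm_of_hasStructureConstants (hdim : Module.finrank ℂ P = 2)
    {μ ν : P →ₗ[ℂ] P →ₗ[ℂ] P} {w : Fin 2 → P} {c d : Fin 2 → Fin 2 → V2}
    (hw : LinearIndependent ℂ w) (hμ : HasStructureConstants μ w c)
    (hν : HasStructureConstants ν w d) :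
    Iso2 (fun x y => μ x y) (fun x y => ν x y) (tm c) (tm d) := by
  obtain ⟨b, rfl⟩ : ∃ b : Module.Basis (Fin 2) ℂ P, b = w :=
    ⟨basisOfLinearIndependentOfCardEqFinrank hw (by simp [hdim]), by simp⟩
  exact ⟨b.equivFun, hμ.equivFun_apply, hν.equivFun_apply⟩

end Tables

theorem iso2_smul_iff {A : Type*} [AddCommGroup A] [Module ℂ A] {μ : A → A → A}
    (hμ : ∃ x y, μ x y ≠ 0) {α β : ℂ} :
    Iso2 μ (fun x y => α • μ x y) μ (fun x y => β • μ x y) ↔ α = β := by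
  constructor
  · rintro ⟨φ, hφ, hφsmul⟩
    obtain ⟨x, y, hxy⟩ := hμ
    have h : α • φ (μ x y) = β • φ (μ x y) := by
      rw [← map_smul, hφsmul, hφ]
    exact smul_left_injective ℂ (φ.map_ne_zero_iff.2 hxy) h
  · rintro rfl
    exact ⟨LinearEquiv.refl ℂ A, fun _ _ => rfl, fun _ _ => rfl⟩

theorem tm_tbl_square (γ : ℂ) :
    tm (tbl ![0, γ] 0 0 0) = fun x y => γ • tm (tbl ![0, 1] 0 0 0) x y := by
  ext x y i
  fin_cases i <;> simp [tm, tbl, mul_comm]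

theorem iso2_tbl_square_iff (α β : ℂ) :
    Iso2 (tm (tbl ![0, 1] 0 0 0)) (tm (tbl ![0, α] 0 0 0))
      (tm (tbl ![0, 1] 0 0 0)) (tm (tbl ![0, β] 0 0 0)) ↔ α = β := by
  rw [tm_tbl_square α, tm_tbl_square β]
  refine iso2_smul_iff ⟨![1, 0], ![1, 0], fun h => ?_⟩
  simpa [tm, tbl] using congrFun h 1

section Plane

variable {K A : Type*} [Field K] [AddCommGroup A] [Module K A]

theorem exists_eq_smul_add_smul (hdim : Module.finrank K A = 2) {u v : A}
    (h : LinearIndependent K ![u, v]) (x : A) : ∃ a b : K, x = a • u + b • v := by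
  have hx : x ∈ Submodule.span K (Set.range ![u, v]) := by
    rw [h.span_eq_top_of_card_eq_finrank (by simp [hdim])]
    exact Submodule.mem_top
  rw [Matrix.range_cons_cons_empty, Submodule.mem_span_pair] at hx
  obtain ⟨a, b, hab⟩ := hx
  exact ⟨a, b, hab.symm⟩

theorem linearIndependent_pair_of_isAlt {B : A →ₗ[K] A →ₗ[K] A} (hB : B.IsAlt) {x y : A}
    (hxy : B x y ≠ 0) : LinearIndependent K ![x, y] := by
  have hx : x ≠ 0 := by
    rintro rfl
    simp at hxy
  refine (LinearIndependent.pair_iff' hx).2 ?_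
  rintro c rfl
  exact hxy (by rw [map_smul, hB x, smul_zero])

theorem exists_isAlt_apply_eq_right (hdim : Module.finrank K A = 2) {B : A →ₗ[K] A →ₗ[K] A}
    (hB : B.IsAlt) {x y : A} (hxy : B x y ≠ 0) :
    ∃ e f, LinearIndependent K ![e, f] ∧ B f e = e := by
  obtain ⟨e, he⟩ : ∃ e, e = B x y := ⟨_, rfl⟩
  rw [← he] at hxy
  obtain ⟨z, hz⟩ := exists_linearIndependent_pair_of_one_lt_finrank (R := K) (by omega) hxy
  obtain ⟨a, b, hx⟩ := exists_eq_smul_add_smul hdim hz x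
  obtain ⟨c, d, hy⟩ := exists_eq_smul_add_smul hdim hz y
  -- `B` takes values in the line of `e`, since `B x y` is a determinant times `B z e`.
  have hdet : B ((b * c - a * d) • z) e = e := by
    conv_rhs => rw [he, hx, hy]
    simp only [map_add, map_smul, LinearMap.add_apply, LinearMap.smul_apply, hB e, hB z,
      ← hB.neg z e]
    module
  refine ⟨e, _, ?_, hdet⟩
  rw [LinearIndependent.pair_symm_iff]
  exact linearIndependent_pair_of_isAlt hB (by rwa [hdet])

theorem exists_apply_self_ne_zero_of_symm [NeZero (2 : K)] {B : A →ₗ[K] A →ₗ[K] A}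
    (hsymm : ∀ x y, B x y = B y x) (hB : ∃ x y, B x y ≠ 0) : ∃ x, B x x ≠ 0 := by
  obtain ⟨x, y, hxy⟩ := hB
  by_contra! hAlt
  have h : (2 : K) • B x y = 0 := by
    rw [two_smul]
    nth_rw 2 [hsymm x y]
    rw [← LinearMap.IsAlt.neg hAlt x y, add_neg_cancel]
  exact hxy ((smul_eq_zero.1 h).resolve_left two_ne_zero)

end Plane

section Algebras

variable {K A : Type*} [CommRing K] [AddCommGroup A] [Module K A]

/-- The left Zinbiel identity for a bilinear multiplication. -/
def IsZinbiel (zin : A →ₗ[K] A →ₗ[K] A) : Prop :=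
  ∀ x y z, zin x (zin y z) = zin (zin y x + zin x y) z

/-- The left pre-Lie identity (left symmetry of the associator) for a bilinear multiplication. -/
def IsPreLie (circ : A →ₗ[K] A →ₗ[K] A) : Prop :=
  ∀ x y z, circ (circ x y) z - circ (circ y x) z = circ x (circ y z) - circ y (circ x z)

/-- A pre-Poisson structure: a Zinbiel multiplication `zin` and a pre-Lie multiplication `circ`
subject to the two compatibility conditions. -/
structure IsPrePoisson (zin circ : A →ₗ[K] A →ₗ[K] A) : Prop where
  isZinbiel : IsZinbiel zin
  isPreLie : IsPreLie circ
  zin_commutator : ∀ x y z, zin (circ x y - circ y x) z = circ x (zin y z) - zin y (circ x z)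
  circ_symmetrization : ∀ x y z,
    circ (zin x y + zin y x) z = zin x (circ y z) + zin y (circ x z)

variable {zin circ : A →ₗ[K] A →ₗ[K] A}

theorem IsZinbiel.two_smul_mul_self_mul (h : IsZinbiel zin) (x y : A) :
    (2 : K) • zin (zin x x) y = zin x (zin x y) := by
  rw [h x x y, map_add, LinearMap.add_apply, two_smul]

theorem IsPreLie.assoc_of_comm (h : IsPreLie circ) (hcomm : ∀ x y, circ x y = circ y x)
    (x y z : A) : circ (circ x y) z = circ x (circ y z) := by
  have hleft : circ z (circ x y) = circ x (circ z y) := by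
    have hzx := h z x y
    rw [hcomm z x, sub_self] at hzx
    exact sub_eq_zero.1 hzx.symm
  rw [hcomm, hleft, hcomm z y]

theorem IsPreLie.mul_mul_sub_mul_mul (h : IsPreLie circ) {e f : A}
    (hfe : circ f e = circ e f + e) (z : A) :
    circ f (circ e z) - circ e (circ f z) = circ e z := by
  rw [← h f e z, hfe, map_add, LinearMap.add_apply, add_sub_cancel_left]

end Algebras

section Zinbiel

variable {K A : Type*} [Field K] [AddCommGroup A] [Module K A] {zin : A →ₗ[K] A →ₗ[K] A}

theorem IsZinbiel.exists_mul_self_ne_zero (h : IsZinbiel zin) (hdim : Module.finrank K A = 2)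
    (hnz : ∃ x y, zin x y ≠ 0) : ∃ x, zin x x ≠ 0 := by
  obtain ⟨x, y, hxy⟩ := hnz
  by_contra! hAlt
  have hnil (z w : A) : zin z (zin w y) = 0 := by
    rw [h, ← LinearMap.IsAlt.neg hAlt z w, neg_add_cancel, map_zero, LinearMap.zero_apply]
  obtain ⟨a, b, hab⟩ :=
    exists_eq_smul_add_smul hdim (linearIndependent_pair_of_isAlt hAlt hxy) (zin x y)
  have hb : b = 0 := by
    have hx := hnil x x
    rw [hab, map_add, map_smul, map_smul, hAlt, smul_zero, zero_add] at hx
    exact (smul_eq_zero.1 hx).resolve_right hxy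
  have ha : a = 0 := by
    have hy := hnil y x
    rw [hab, hb, zero_smul, add_zero, map_smul, ← LinearMap.IsAlt.neg hAlt x y] at hy
    exact (smul_eq_zero.1 hy).resolve_right (neg_ne_zero.2 hxy)
  exact hxy (by rw [hab, ha, hb, zero_smul, zero_smul, add_zero])

theorem IsZinbiel.linearIndependent_mul_self (h : IsZinbiel zin) {x : A} (hx : zin x x ≠ 0) :
    LinearIndependent K ![x, zin x x] := by
  have hx₀ : x ≠ 0 := by
    rintro rfl
    simp at hx
  refine (LinearIndependent.pair_iff' hx₀).2 fun c hc => hx ?_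
  have hcube := h x x x
  simp only [← hc, map_add, map_smul, LinearMap.add_apply, LinearMap.smul_apply] at hcube
  have hzero : c • c • x = 0 := left_eq_add.1 hcube
  rw [← hc]
  rcases smul_eq_zero.1 hzero with rfl | hcx
  · exact zero_smul K x
  · exact hcx

theorem IsZinbiel.mul_mul_self_eq_zero (h : IsZinbiel zin) (hdim : Module.finrank K A = 2)
    {x : A} (hx : zin x x ≠ 0) : zin x (zin x x) = 0 := by
  have hind := h.linearIndependent_mul_self hx
  set v := zin x x with hv
  obtain ⟨a, b, hvx⟩ := exists_eq_smul_add_smul hdim hind (zin v x)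
  have hxv : zin x v = (2 * a) • x + (2 * b) • v := by
    rw [← h.two_smul_mul_self_mul x x, ← hv, hvx, smul_add, smul_smul, smul_smul]
  -- `x·(v·x) = (v·x + x·v)·x`, expanded on the basis `x`, `v`
  have hrel : (a * b) • x + (2 * a + b ^ 2) • v = 0 := by
    have hxvx := h x v x
    simp only [hvx, hxv, map_add, map_smul, LinearMap.add_apply, LinearMap.smul_apply, ← hv]
      at hxvx
    rw [← sub_eq_zero, ← neg_eq_zero] at hxvx
    rw [← hxvx]
    module
  obtain ⟨hab, hsq⟩ := hind.eq_zero_of_pair hrel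
  have hb : b = 0 := by
    have hcube : b ^ 3 = 0 := by linear_combination b * hsq - 2 * hab
    exact eq_zero_of_pow_eq_zero hcube
  rw [hxv, hb, show 2 * a = 0 by simpa [hb] using hsq]
  simp

theorem IsZinbiel.mul_self_mul_eq_zero [NeZero (2 : K)] (h : IsZinbiel zin)
    (hdim : Module.finrank K A = 2) {x : A} (hx : zin x x ≠ 0) (y : A) :
    zin (zin x x) y = 0 := by
  obtain ⟨a, b, rfl⟩ := exists_eq_smul_add_smul hdim (h.linearIndependent_mul_self hx) y
  have htwice := h.two_smul_mul_self_mul x (a • x + b • zin x x)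
  rw [map_add (zin x), map_smul, map_smul, h.mul_mul_self_eq_zero hdim hx, smul_zero, add_zero,
    map_smul, h.mul_mul_self_eq_zero hdim hx, smul_zero] at htwice
  exact (smul_eq_zero.1 htwice).resolve_left two_ne_zero

end Zinbiel

section PrePoisson

variable {K A : Type*} [Field K] [NeZero (2 : K)] [AddCommGroup A] [Module K A]
  {zin circ : A →ₗ[K] A →ₗ[K] A}

theorem IsPrePoisson.circ_mul_self (h : IsPrePoisson zin circ) (x y : A) :
    circ (zin x x) y = zin x (circ x y) := by
  have htwice := h.circ_symmetrization x x y
  rw [map_add, LinearMap.add_apply, ← two_smul K, ← two_smul K] at htwice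
  exact smul_right_injective A two_ne_zero htwice

theorem IsPrePoisson.circ_eq_of_mul_self_ne_zero (h : IsPrePoisson zin circ)
    (hdim : Module.finrank K A = 2) {x : A} (hx : zin x x ≠ 0) {a b : K}
    (hab : circ x x = a • x + b • zin x x) :
    circ x (zin x x) = a • zin x x ∧ circ (zin x x) x = a • zin x x ∧
      circ (zin x x) (zin x x) = 0 := by
  have hcube := h.isZinbiel.mul_mul_self_eq_zero hdim hx
  have hzin : zin x (circ x x) = a • zin x x := by
    rw [hab, map_add, map_smul, map_smul, hcube, smul_zero, add_zero]
  have hright : circ x (zin x x) = a • zin x x := by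
    have hcomm := h.zin_commutator x x x
    rw [sub_self, map_zero, LinearMap.zero_apply] at hcomm
    rw [← hzin]
    exact sub_eq_zero.1 hcomm.symm
  refine ⟨hright, ?_, ?_⟩
  · rw [h.circ_mul_self, hzin]
  · rw [h.circ_mul_self, hright, map_smul, hcube, smul_zero]

theorem IsPrePoisson.exists_circ_self_eq_self (h : IsPrePoisson zin circ)
    (hdim : Module.finrank K A = 2) {x : A} (hx : zin x x ≠ 0) {a b : K} (ha : a ≠ 0)
    (hab : circ x x = a • x + b • zin x x) : ∃ y, zin y y ≠ 0 ∧ circ y y = y := by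
  obtain ⟨hxv, hvx, hvv⟩ := h.circ_eq_of_mul_self_ne_zero hdim hx hab
  have hcube := h.isZinbiel.mul_mul_self_eq_zero hdim hx
  have hleft := h.isZinbiel.mul_self_mul_eq_zero hdim hx
  refine ⟨a⁻¹ • x + (-b / a ^ 2) • zin x x, ?_, ?_⟩
  · simpa [hcube, hleft] using ⟨ha, hx⟩
  · simp only [map_add, map_smul, LinearMap.add_apply, LinearMap.smul_apply, hab, hxv, hvx, hvv]
    match_scalars <;> field_simp
    ring

end PrePoisson

section PrePoissonTables

variable {P : Type*} [AddCommGroup P] [Module ℂ P] {zin circ : P →ₗ[ℂ] P →ₗ[ℂ] P}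

theorem IsPrePoisson.iso2_of_zin_ne_zero (h : IsPrePoisson zin circ)
    (hdim : Module.finrank ℂ P = 2) (hnz : ∃ x y, zin x y ≠ 0) :
    (∃ α : ℂ, Iso2 (fun x y => zin x y) (fun x y => circ x y)
        (tm (tbl ![0, 1] 0 0 0)) (tm (tbl ![0, α] 0 0 0))) ∨
      Iso2 (fun x y => zin x y) (fun x y => circ x y)
        (tm (tbl ![0, 1] 0 0 0)) (tm (tbl ![1, 0] ![0, 1] ![0, 1] 0)) := by
  have hzin {x : P} (hx : zin x x ≠ 0) :
      HasStructureConstants zin ![x, zin x x] (tbl ![0, 1] 0 0 0) :=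
    hasStructureConstants_tbl_iff.2 (by
      simp [h.isZinbiel.mul_mul_self_eq_zero hdim hx, h.isZinbiel.mul_self_mul_eq_zero hdim hx])
  obtain ⟨x, hx⟩ := h.isZinbiel.exists_mul_self_ne_zero hdim hnz
  have hind := h.isZinbiel.linearIndependent_mul_self hx
  obtain ⟨a, b, hab⟩ := exists_eq_smul_add_smul hdim hind (circ x x)
  rcases eq_or_ne a 0 with rfl | ha
  · obtain ⟨hxv, hvx, hvv⟩ := h.circ_eq_of_mul_self_ne_zero hdim hx hab
    refine .inl ⟨b, iso2_tm_of_hasStructureConstants hdim hind (hzin hx)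
      (hasStructureConstants_tbl_iff.2 ?_)⟩
    simp [hab, hxv, hvx, hvv]
  · obtain ⟨y, hy, hyy⟩ := h.exists_circ_self_eq_self hdim hx ha hab
    obtain ⟨hyv, hvy, hvv⟩ :=
      h.circ_eq_of_mul_self_ne_zero hdim hy (a := 1) (b := 0) (by simp [hyy])
    refine .inr (iso2_tm_of_hasStructureConstants hdim
      (h.isZinbiel.linearIndependent_mul_self hy) (hzin hy)
      (hasStructureConstants_tbl_iff.2 ?_))
    simp [hyy, hyv, hvy, hvv]

end PrePoissonTables

section CommutativePreLie

variable {K A : Type*} [Field K] [AddCommGroup A] [Module K A]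

theorem exists_apply_eq_zero_or_self_of_isIdempotentElem {T : Module.End K A}
    (hT : IsIdempotentElem T) (hdim : 1 < Module.finrank K A) {e : A} (he : e ≠ 0) (hTe : T e = e) :
    ∃ f, LinearIndependent K ![e, f] ∧ (T f = 0 ∨ T f = f) := by
  by_cases hid : ∀ z, T z = z
  · obtain ⟨f, hf⟩ := exists_linearIndependent_pair_of_one_lt_finrank hdim he
    exact ⟨f, hf, .inr (hid f)⟩
  · push Not at hid
    obtain ⟨z, hz⟩ := hid
    have hker : T (z - T z) = 0 := by
      rw [map_sub, ← Module.End.mul_apply, hT, sub_self]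
    refine ⟨z - T z, (LinearIndependent.pair_iff' he).2 fun c hc => hz ?_, .inl hker⟩
    have hce : c • e = 0 := by rw [← hTe, ← map_smul, hc, hker]
    rw [hce] at hc
    exact (sub_eq_zero.1 hc.symm).symm

variable {circ : A →ₗ[K] A →ₗ[K] A}

theorem IsPreLie.exists_idempotent_of_mul_mul_self_eq (h : IsPreLie circ)
    (hcomm : ∀ x y, circ x y = circ y x) {x : A} (hx : x ≠ 0) {a b : K} (ha : a ≠ 0)
    (hcube : circ x (circ x x) = a • x + b • circ x x) : ∃ e, e ≠ 0 ∧ circ e e = e := by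
  -- `e` acts as the identity on `x`, hence by associativity on `x∘x`, hence on itself.
  obtain ⟨e, he⟩ : ∃ e, e = a⁻¹ • (circ x x - b • x) := ⟨_, rfl⟩
  have hex : circ e x = x := by
    rw [he, hcomm, map_smul, map_sub, map_smul, hcube, add_sub_cancel_right, inv_smul_smul₀ ha]
  have hexx : circ e (circ x x) = circ x x := by
    rw [← h.assoc_of_comm hcomm, hex]
  refine ⟨e, fun he₀ => hx ?_, ?_⟩
  · rw [← hex, he₀, map_zero, LinearMap.zero_apply]
  · nth_rw 2 [he]
    rw [map_smul, map_sub, map_smul, hex, hexx, ← he]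

theorem IsPreLie.exists_idempotent_or_nilpotent [NeZero (2 : K)] (h : IsPreLie circ)
    (hdim : Module.finrank K A = 2) (hcomm : ∀ x y, circ x y = circ y x)
    (hnz : ∃ x y, circ x y ≠ 0) :
    (∃ e, e ≠ 0 ∧ circ e e = e) ∨
      ∃ x y, LinearIndependent K ![x, y] ∧ circ x x = y ∧ circ x y = 0 ∧ circ y y = 0 := by
  obtain ⟨x, hx⟩ := exists_apply_self_ne_zero_of_symm hcomm hnz
  obtain ⟨y, hxx⟩ : ∃ y, circ x x = y := ⟨_, rfl⟩
  rw [hxx] at hx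
  have hx₀ : x ≠ 0 := by
    rintro rfl
    exact hx (by rw [← hxx, map_zero])
  by_cases hind : LinearIndependent K ![x, y]
  · obtain ⟨a, b, hxy⟩ := exists_eq_smul_add_smul hdim hind (circ x y)
    have hyy : circ y y = a • y + b • circ x y := by
      nth_rw 1 [← hxx]
      rw [h.assoc_of_comm hcomm, hxy, map_add, map_smul, map_smul, hxx, ← hxy]
    rcases eq_or_ne a 0 with rfl | ha
    · rcases eq_or_ne b 0 with rfl | hb
      · exact .inr ⟨x, y, hind, hxx, by simpa using hxy, by simpa using hyy⟩
      · rw [zero_smul, zero_add] at hxy hyy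
        refine .inl ⟨(b ^ 2)⁻¹ • y, by simpa using ⟨hb, hx⟩, ?_⟩
        simp only [map_smul, LinearMap.smul_apply, hyy, hxy]
        match_scalars
        field_simp
    · subst hxx
      exact .inl (h.exists_idempotent_of_mul_mul_self_eq hcomm hx₀ ha hxy)
  · obtain ⟨c, hc⟩ : ∃ c : K, c • x = y := by
      simpa [LinearIndependent.pair_iff' hx₀] using hind
    have hc₀ : c ≠ 0 := by
      rintro rfl
      exact hx (by rw [← hc, zero_smul])
    refine .inl ⟨c⁻¹ • x, smul_ne_zero (inv_ne_zero hc₀) hx₀, ?_⟩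
    rw [map_smul, map_smul, LinearMap.smul_apply, hxx, ← hc, inv_smul_smul₀ hc₀]

theorem exists_mul_self_eq_smul_of_unital [NeZero (2 : K)] (hdim : Module.finrank K A = 2) {e f : A}
    (hind : LinearIndependent K ![e, f]) (hee : circ e e = e) (hef : circ e f = f)
    (hfe : circ f e = f) :
    ∃ (g : A) (δ : K), LinearIndependent K ![e, g] ∧ circ e g = g ∧ circ g e = g ∧
      circ g g = δ • e := by
  obtain ⟨a, b, hff⟩ := exists_eq_smul_add_smul hdim hind (circ f f)
  have htwo : (2 : K) ≠ 0 := two_ne_zero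
  -- completing the square in `f ^ 2 = a + b f`
  refine ⟨(-b / 2) • e + f, a + b ^ 2 / 4, by simpa using hind, ?_, ?_, ?_⟩
  · rw [map_add, map_smul, hee, hef]
  · rw [map_add, map_smul, LinearMap.add_apply, LinearMap.smul_apply, hee, hfe]
  · simp only [map_add, map_smul, LinearMap.add_apply, LinearMap.smul_apply, hee, hef, hfe, hff]
    have hfour : (4 : K) = 2 * 2 := by norm_num
    rw [hfour]
    match_scalars <;> field_simp <;> ring

end CommutativePreLie

section CommutativePreLieTables

variable {P : Type*} [AddCommGroup P] [Module ℂ P] {circ : P →ₗ[ℂ] P →ₗ[ℂ] P} {e f : P}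

theorem exists_hasTable_of_unital (hdim : Module.finrank ℂ P = 2)
    (hind : LinearIndependent ℂ ![e, f]) (hee : circ e e = e) (hef : circ e f = f)
    (hfe : circ f e = f) : ∃ i, HasTable circ (plAlg i) := by
  obtain ⟨g, δ, hind, heg, hge, hgg⟩ := exists_mul_self_eq_smul_of_unital hdim hind hee hef hfe
  obtain ⟨s, rfl⟩ := IsAlgClosed.exists_eq_mul_self δ
  rcases eq_or_ne s 0 with rfl | hs
  · exact ⟨.c06 1, .of_pair hind (by simp [hee]) (by simp [heg]) (by simp [hge]) (by simp [hgg])⟩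
  -- orthogonal idempotents `(1 ± g / s) / 2`, since `g ^ 2 = s ^ 2`
  · have hidem : LinearIndependent ℂ
        ![(1 / 2 : ℂ) • e + (1 / (2 * s)) • g, (1 / 2 : ℂ) • e + (-1 / (2 * s)) • g] := by
      refine (LinearIndependent.pair_add_smul_add_smul_iff ..).2 ⟨hind, fun h => ?_⟩
      field_simp at h
      norm_num at h
    refine ⟨.c07, .of_pair hidem ?_ ?_ ?_ ?_⟩ <;>
      simp only [map_add, map_smul, LinearMap.add_apply, LinearMap.smul_apply, hee, heg, hge, hgg,
        Matrix.cons_val_zero, Matrix.cons_val_one, Pi.zero_apply] <;>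
      match_scalars <;> field_simp <;> norm_num

theorem exists_hasTable_of_orthogonal (hdim : Module.finrank ℂ P = 2)
    (hind : LinearIndependent ℂ ![e, f]) (hee : circ e e = e) (hef : circ e f = 0)
    (hfe : circ f e = 0) (heff : circ e (circ f f) = 0) : ∃ i, HasTable circ (plAlg i) := by
  obtain ⟨a, b, hff⟩ := exists_eq_smul_add_smul hdim hind (circ f f)
  obtain rfl : a = 0 := by
    rw [hff, map_add, map_smul, map_smul, hee, hef, smul_zero, add_zero] at heff
    exact (smul_eq_zero.1 heff).resolve_right (hind.ne_zero 0)
  rw [zero_smul, zero_add] at hff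
  rcases eq_or_ne b 0 with rfl | hb
  · exact ⟨.c05 0, .of_pair hind (by simp [hee]) (by simp [hef]) (by simp [hfe]) (by simp [hff])⟩
  · have hscaled : LinearIndependent ℂ ![e, b⁻¹ • f] := by
      simpa using (LinearIndependent.pair_smul_smul_iff isUnit_one (inv_ne_zero hb).isUnit).2 hind
    exact ⟨.c07, .of_pair hscaled (by simp [hee]) (by simp [hef]) (by simp [hfe])
      (by simp [hff, hb])⟩

theorem IsPreLie.exists_hasTable_of_comm (h : IsPreLie circ) (hdim : Module.finrank ℂ P = 2)
    (hcomm : ∀ x y, circ x y = circ y x) (hnz : ∃ x y, circ x y ≠ 0) :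
    ∃ i, HasTable circ (plAlg i) := by
  rcases h.exists_idempotent_or_nilpotent hdim hcomm hnz with
    ⟨e, he, hee⟩ | ⟨x, y, hind, hxx, hxy, hyy⟩
  · have hidem : IsIdempotentElem (circ e) :=
      LinearMap.ext fun z => by rw [Module.End.mul_apply, ← h.assoc_of_comm hcomm, hee]
    obtain ⟨f, hind, hef | hef⟩ :=
      exists_apply_eq_zero_or_self_of_isIdempotentElem hidem (by omega) he hee
    · refine exists_hasTable_of_orthogonal hdim hind hee hef (by rw [hcomm, hef]) ?_
      rw [← h.assoc_of_comm hcomm, hef, map_zero, LinearMap.zero_apply]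
    · exact exists_hasTable_of_unital hdim hind hee hef (by rw [hcomm, hef])
  · exact ⟨.c03, .of_pair hind (by simp [hxx]) (by simp [hxy]) (by simp [hcomm y x, hxy])
      (by simp [hyy])⟩

end CommutativePreLieTables

section NoncommutativePreLie

variable {K A : Type*} [Field K] [AddCommGroup A] [Module K A] {circ : A →ₗ[K] A →ₗ[K] A}
  {e f : A}

theorem IsPreLie.eq_zero_of_mul_self_eq_smul [NeZero (2 : K)] (h : IsPreLie circ)
    (hdim : Module.finrank K A = 2) (hind : LinearIndependent K ![e, f])
    (hfe : circ f e = circ e f + e) {p : K} (hee : circ e e = p • e) : p = 0 := by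
  obtain ⟨r, s, hef⟩ := exists_eq_smul_add_smul hdim hind (circ e f)
  obtain ⟨t, u, hff⟩ := exists_eq_smul_add_smul hdim hind (circ f f)
  have he := h.mul_mul_sub_mul_mul hfe e
  have hf := h.mul_mul_sub_mul_mul hfe f
  simp only [hfe, hef, hee, hff, map_add, map_smul] at he hf
  rw [← sub_eq_zero] at he hf
  obtain ⟨hp, hs⟩ := hind.eq_zero_of_pair (s := -(s * r) - p) (t := p * s - s ^ 2) (by
    rw [← he]
    module)
  obtain ⟨-, hrs⟩ := hind.eq_zero_of_pair (s := r ^ 2 + s * t - t * p - u * r) (t := r * s - s) (by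
    rw [← hf]
    module)
  have hps : p = -s := by linear_combination -hp - hrs
  have hsq : 2 * p ^ 2 = 0 := by
    rw [hps] at hs ⊢
    linear_combination -hs
  exact eq_zero_of_pow_eq_zero ((mul_eq_zero.1 hsq).resolve_left two_ne_zero)

theorem IsPreLie.exists_commutator_eq_and_mul_self_eq [NeZero (2 : K)] (h : IsPreLie circ)
    (hdim : Module.finrank K A = 2) (hnc : ∃ x y, circ x y ≠ circ y x) :
    ∃ (e f : A) (q : K), LinearIndependent K ![e, f] ∧ circ f e = circ e f + e ∧
      circ e e = q • f := by
  obtain ⟨x, y, hxy⟩ := hnc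
  have hAlt : (circ - circ.flip).IsAlt := fun x => sub_self (circ x x)
  obtain ⟨e, f, hind, hfe⟩ := exists_isAlt_apply_eq_right hdim hAlt (x := x) (y := y)
    (sub_ne_zero.2 hxy)
  replace hfe : circ f e = circ e f + e := sub_eq_iff_eq_add'.1 hfe
  obtain ⟨p, q, hee⟩ := exists_eq_smul_add_smul hdim hind (circ e e)
  rcases eq_or_ne q 0 with rfl | hq
  · rw [zero_smul, add_zero] at hee
    exact ⟨e, f, 0, hind, hfe,
      by rw [hee, h.eq_zero_of_mul_self_eq_smul hdim hind hfe hee, zero_smul, zero_smul]⟩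
  · refine ⟨e, (p / q) • e + f, q, by simpa using hind, ?_, ?_⟩
    · simp only [map_add, map_smul, LinearMap.add_apply, LinearMap.smul_apply, hfe, add_assoc]
    · rw [hee, smul_add, smul_smul, mul_div_cancel₀ p hq]

theorem IsPreLie.coeff_relations (h : IsPreLie circ) (hind : LinearIndependent K ![e, f])
    (hfe : circ f e = circ e f + e) {q r s t u : K} (hee : circ e e = q • f)
    (hef : circ e f = r • e + s • f) (hff : circ f f = t • e + u • f) :
    s = 0 ∧ r * (r - u) = 0 ∧ q * t = 0 ∧ q * (u - r - 2) = 0 := by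
  have he := h.mul_mul_sub_mul_mul hfe e
  have hf := h.mul_mul_sub_mul_mul hfe f
  simp only [hfe, hef, hee, hff, map_add, map_smul] at he hf
  rw [← sub_eq_zero] at he hf
  obtain ⟨hqt, hqu⟩ := hind.eq_zero_of_pair (s := q * t - s * r)
    (t := q * (u - r - 2) - s ^ 2) (by
      rw [← he]
      module)
  obtain ⟨hru, hrs⟩ := hind.eq_zero_of_pair (s := r * (r - u) + s * t)
    (t := r * s - q * t - s) (by
      rw [← hf]
      module)
  obtain rfl : s = 0 := by linear_combination -hqt - hrs
  exact ⟨rfl, by simpa using hru, by simpa using hqt, by simpa using hqu⟩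

/-- A basis adapted to a noncommutative pre-Lie plane: the line of `e` is an ideal with square zero
and the commutator of `f` and `e` is `e`. The remaining structure constants are `r`, `t`, `u`. -/
structure TriangularPair (circ : A →ₗ[K] A →ₗ[K] A) (e f : A) (r t u : K) : Prop where
  linearIndependent : LinearIndependent K ![e, f]
  mul_ee : circ e e = 0
  mul_ef : circ e f = r • e
  mul_fe : circ f e = (r + 1) • e
  mul_ff : circ f f = t • e + u • f

theorem TriangularPair.linearIndependent_smul_smul {r t u a b : K}
    (h : TriangularPair circ e f r t u) (ha : a ≠ 0) (hb : b ≠ 0) :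
    LinearIndependent K ![a • f, b • e] :=
  (LinearIndependent.pair_smul_smul_iff ha.isUnit hb.isUnit).2
    (LinearIndependent.pair_symm_iff.1 h.linearIndependent)

theorem TriangularPair.exists_mul_self_eq_smul {r t u : K} (h : TriangularPair circ e f r t u)
    (hu : u ≠ 2 * r + 1) : ∃ g, TriangularPair circ e g r 0 u := by
  have hu' : u - (2 * r + 1) ≠ 0 := sub_ne_zero.2 hu
  refine ⟨(t / (u - (2 * r + 1))) • e + f, by simpa using h.linearIndependent, h.mul_ee, ?_, ?_, ?_⟩
  · rw [map_add, map_smul, h.mul_ee, h.mul_ef, smul_zero, zero_add]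
  · rw [map_add, map_smul, LinearMap.add_apply, LinearMap.smul_apply, h.mul_ee, h.mul_fe,
      smul_zero, zero_add]
  · simp only [map_add, map_smul, LinearMap.add_apply, LinearMap.smul_apply, h.mul_ee, h.mul_ef,
      h.mul_fe, h.mul_ff]
    match_scalars <;> field_simp
    ring

theorem IsPreLie.exists_triangularPair_or [NeZero (2 : K)] (h : IsPreLie circ)
    (hdim : Module.finrank K A = 2) (hnc : ∃ x y, circ x y ≠ circ y x) :
    (∃ e f r t u, TriangularPair circ e f r t u ∧ (r = 0 ∨ r = u)) ∨
      ∃ (e f : A) (q : K), q ≠ 0 ∧ LinearIndependent K ![e, f] ∧ circ e e = q • f ∧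
        circ e f = 0 ∧ circ f e = e ∧ circ f f = (2 : K) • f := by
  obtain ⟨e, f, q, hind, hfe, hee⟩ := h.exists_commutator_eq_and_mul_self_eq hdim hnc
  obtain ⟨r, s, hef⟩ := exists_eq_smul_add_smul hdim hind (circ e f)
  obtain ⟨t, u, hff⟩ := exists_eq_smul_add_smul hdim hind (circ f f)
  obtain ⟨rfl, hru, hqt, hqu⟩ := h.coeff_relations hind hfe hee hef hff
  rw [zero_smul, add_zero] at hef
  rcases eq_or_ne q 0 with rfl | hq
  · refine .inl ⟨e, f, r, t, u, ⟨hind, by rw [hee, zero_smul], hef, ?_, hff⟩, ?_⟩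
    · rw [hfe, hef, add_smul, one_smul]
    · exact (mul_eq_zero.1 hru).imp_right sub_eq_zero.1
  · obtain rfl : t = 0 := (mul_eq_zero.1 hqt).resolve_left hq
    obtain rfl : u = r + 2 := by linear_combination (mul_eq_zero.1 hqu).resolve_left hq
    obtain rfl : r = 0 := by simpa [two_ne_zero (α := K)] using hru
    rw [zero_smul] at hef
    exact .inr ⟨e, f, q, hq, hind, hee, hef, by rw [hfe, hef, zero_add], by simpa using hff⟩

end NoncommutativePreLie

section NoncommutativePreLieTables

variable {P : Type*} [AddCommGroup P] [Module ℂ P] {circ : P →ₗ[ℂ] P →ₗ[ℂ] P} {e f : P}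

theorem TriangularPair.exists_hasTable_of_left_zero_of_diagonal {u : ℂ}
    (h : TriangularPair circ e f 0 0 u) : ∃ i, HasTable circ (plAlg i) := by
  rcases eq_or_ne u 0 with rfl | hu
  · exact ⟨.c04, .of_pair h.linearIndependent (by simp [h.mul_ee]) (by simp [h.mul_ef])
      (by simp [h.mul_fe]) (by simp [h.mul_ff])⟩
  · exact ⟨.c05 u⁻¹, .of_pair (u := u⁻¹ • f) (v := e)
      (by simpa using h.linearIndependent_smul_smul (inv_ne_zero hu) one_ne_zero)
      (by simp [h.mul_ff, hu]) (by simp [h.mul_fe]) (by simp [h.mul_ef]) (by simp [h.mul_ee])⟩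

theorem TriangularPair.exists_hasTable_of_left_zero {t u : ℂ}
    (h : TriangularPair circ e f 0 t u) : ∃ i, HasTable circ (plAlg i) := by
  rcases eq_or_ne u 1 with rfl | hu
  · rcases eq_or_ne t 0 with rfl | ht
    · exact h.exists_hasTable_of_left_zero_of_diagonal
    · exact ⟨.c02, .of_pair (u := f) (v := t • e)
        (by simpa using h.linearIndependent_smul_smul one_ne_zero ht)
        (by simp [h.mul_ff, add_comm]) (by simp [h.mul_fe]) (by simp [h.mul_ef])
        (by simp [h.mul_ee])⟩
  · obtain ⟨g, hg⟩ := h.exists_mul_self_eq_smul (by simpa using hu)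
    exact hg.exists_hasTable_of_left_zero_of_diagonal

theorem TriangularPair.exists_hasTable_of_left_eq_of_diagonal {r : ℂ}
    (h : TriangularPair circ e f r 0 r) : ∃ i, HasTable circ (plAlg i) := by
  rcases eq_or_ne r 0 with rfl | hr
  · exact h.exists_hasTable_of_left_zero
  · exact ⟨.c06 (r⁻¹ * (r + 1)), .of_pair (u := r⁻¹ • f) (v := e)
      (by simpa using h.linearIndependent_smul_smul (inv_ne_zero hr) one_ne_zero)
      (by simp [h.mul_ff, hr]) (by simp [h.mul_fe, smul_smul]) (by simp [h.mul_ef, hr])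
      (by simp [h.mul_ee])⟩

theorem TriangularPair.exists_hasTable_of_left_eq {r t : ℂ}
    (h : TriangularPair circ e f r t r) : ∃ i, HasTable circ (plAlg i) := by
  rcases eq_or_ne r (-1) with rfl | hr
  · rcases eq_or_ne t 0 with rfl | ht
    · exact h.exists_hasTable_of_left_eq_of_diagonal
    · exact ⟨.c01, .of_pair (u := (-1 : ℂ) • f) (v := t • e)
        (h.linearIndependent_smul_smul (by simp) ht)
        (by simp [h.mul_ff, add_comm]) (by simp [h.mul_fe]) (by simp [h.mul_ef])
        (by simp [h.mul_ee])⟩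
  · obtain ⟨g, hg⟩ := h.exists_mul_self_eq_smul
      fun hr' => hr (by linear_combination -hr')
    exact hg.exists_hasTable_of_left_eq_of_diagonal

theorem hasTable_c08 {q : ℂ} (hq : q ≠ 0) (hind : LinearIndependent ℂ ![e, f])
    (hee : circ e e = q • f) (hef : circ e f = 0) (hfe : circ f e = e)
    (hff : circ f f = (2 : ℂ) • f) : HasTable circ (plAlg .c08) := by
  obtain ⟨n, hn⟩ := IsAlgClosed.exists_eq_mul_self (-q⁻¹)
  have hnq : n * n * q = -1 := by rw [← hn, neg_mul, inv_mul_cancel₀ hq]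
  have hn₀ : n ≠ 0 := by
    rintro rfl
    simp at hnq
  -- The idempotents are `f / 2` and the vectors `f + n e` with `n ^ 2 * q = -1`.
  have hidem : LinearIndependent ℂ ![n • e + (1 : ℂ) • f, (0 : ℂ) • e + (1 / 2 : ℂ) • f] :=
    (LinearIndependent.pair_add_smul_add_smul_iff ..).2 ⟨hind, by simpa using hn₀⟩
  refine .of_pair hidem ?_ ?_ ?_ ?_ <;>
    simp only [map_add, map_smul, LinearMap.add_apply, LinearMap.smul_apply, hee, hef, hfe, hff,
      Matrix.cons_val_zero, Matrix.cons_val_one]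
  · match_scalars
    · linear_combination hnq
    · ring
  all_goals
    match_scalars <;> ring

theorem IsPreLie.exists_hasTable_of_noncomm (h : IsPreLie circ) (hdim : Module.finrank ℂ P = 2)
    (hnc : ∃ x y, circ x y ≠ circ y x) : ∃ i, HasTable circ (plAlg i) := by
  rcases h.exists_triangularPair_or hdim hnc with
    ⟨e, f, r, t, u, hef, rfl | rfl⟩ | ⟨e, f, q, hq, hind, hee, hef, hfe, hff⟩
  · exact hef.exists_hasTable_of_left_zero
  · exact hef.exists_hasTable_of_left_eq
  · exact ⟨.c08, hasTable_c08 hq hind hee hef hfe hff⟩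

theorem IsPreLie.exists_hasTable_plAlg (h : IsPreLie circ) (hdim : Module.finrank ℂ P = 2)
    (hnz : ∃ x y, circ x y ≠ 0) : ∃ i, HasTable circ (plAlg i) := by
  by_cases hcomm : ∀ x y, circ x y = circ y x
  · exact h.exists_hasTable_of_comm hdim hcomm hnz
  · push Not at hcomm
    exact h.exists_hasTable_of_noncomm hdim hcomm

end NoncommutativePreLieTables

/-- Every nonzero 2-dimensional pre-Poisson algebra over ℂ is
isomorphic to one of the pre-Lie algebras P01–P08 (with `· ≡ 0`, the same tables as
C01–C08), or to P09^α or P10; moreover `P09^α ≅ P09^β` iff `α = β`. -/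
theorem statement19 (P : Type*) [AddCommGroup P] [Module ℂ P]
    (hdim : Module.finrank ℂ P = 2)
    (zin circ : P →ₗ[ℂ] P →ₗ[ℂ] P)
    (hzin : ∀ x y z : P, zin x (zin y z) = zin (zin y x + zin x y) z)
    (hpre : ∀ x y z : P, circ (circ x y) z - circ (circ y x) z =
      circ x (circ y z) - circ y (circ x z))
    (hcompat₁ : ∀ x y z : P, zin (circ x y - circ y x) z =
      circ x (zin y z) - zin y (circ x z))
    (hcompat₂ : ∀ x y z : P, circ (zin x y + zin y x) z =
      zin x (circ y z) + zin y (circ x z))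
    (hnz : (∃ x y : P, zin x y ≠ 0) ∨ (∃ x y : P, circ x y ≠ 0)) :
    ((∃ i : PLIdx, Iso2 (fun x y => zin x y) (fun x y => circ x y)
        zm (tm (plAlg i))) ∨
     -- P09^α : e1·e1 = e2, e1∘e1 = α e2
     (∃ α : ℂ, Iso2 (fun x y => zin x y) (fun x y => circ x y)
        (tm (tbl ![0,1] 0 0 0)) (tm (tbl ![0,α] 0 0 0))) ∨
     -- P10 : e1·e1 = e2, e1∘e1 = e1, e1∘e2 = e2, e2∘e1 = e2
     Iso2 (fun x y => zin x y) (fun x y => circ x y)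
        (tm (tbl ![0,1] 0 0 0)) (tm (tbl ![1,0] ![0,1] ![0,1] 0))) ∧
    (∀ α β : ℂ, Iso2 (tm (tbl ![0,1] 0 0 0)) (tm (tbl ![0,α] 0 0 0))
        (tm (tbl ![0,1] 0 0 0)) (tm (tbl ![0,β] 0 0 0)) ↔ α = β) := by
  refine ⟨?_, iso2_tbl_square_iff⟩
  have hP : IsPrePoisson zin circ := ⟨hzin, hpre, hcompat₁, hcompat₂⟩
  by_cases hz : ∃ x y, zin x y ≠ 0
  · exact .inr (hP.iso2_of_zin_ne_zero hdim hz)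
  · obtain ⟨i, w, hw, hcirc⟩ := hP.isPreLie.exists_hasTable_plAlg hdim (hnz.resolve_left hz)
    push Not at hz
    refine .inl ⟨i, ?_⟩
    rw [← tm_zero]
    exact iso2_tm_of_hasStructureConstants hdim hw (by simp [HasStructureConstants, hz]) hcirc
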